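/- Let k ≥ 3 and let n_1, …, n_k be positive integers such that n_1 is odd and n_i is even for every i with 2 ≤ i ≤ k. If n_1 = 3 or n_i = 2 for some i with 2 ≤ i ≤ k, then the signed domination number of the complete k-partite graph K_{n_1,…,n_k} equals 3. -/

import Mathlib

open scoped Classical

/-- The signed domination number of a finite simple graph `G`: the minimum weight of a
function `f : V → {−1, 1}` such that `f(N[v]) ≥ 1` for every vertex `v`. -/
noncomputable def signedDomNum {V : Type*} [Fintype V] (G : SimpleGraph V) : ℤ :=
  sInf {w : ℤ | ∃ f : V → ℤ, (∀ v, f v = 1 ∨ f v = -1) ∧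
    (∀ v, 1 ≤ f v + ∑ u ∈ G.neighborFinset v, f u) ∧ w = ∑ v, f v}

namespace SignedDomination

variable {k : ℕ} {n : Fin k → ℕ}

/-- The sum over an open neighborhood in a complete multipartite graph is the total weight minus
the weight of the part of the vertex. -/
lemma sum_neighborFinset_completeMultipartiteGraph (f : (Σ i, Fin (n i)) → ℤ)
    (v : Σ i, Fin (n i)) [Fintype ((SimpleGraph.completeMultipartiteGraph
      fun i : Fin k => Fin (n i)).neighborSet v)] :
    ∑ u ∈ (SimpleGraph.completeMultipartiteGraph fun i : Fin k => Fin (n i)).neighborFinset v, f u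
      = ∑ u, f u - ∑ j, f ⟨v.1, j⟩ := by
  have hfilter : (SimpleGraph.completeMultipartiteGraph
      fun i : Fin k => Fin (n i)).neighborFinset v
        = Finset.univ.filter fun u : Σ i, Fin (n i) => v.1 ≠ u.1 := by
    ext u
    simp [SimpleGraph.completeMultipartiteGraph]
  have hpart : ∑ u with v.1 = u.1, f u = ∑ j, f ⟨v.1, j⟩ := by
    rw [Finset.sum_filter, Fintype.sum_sigma, Finset.sum_eq_single v.1]
    · simp
    · intro i _ hi
      simp [hi.symm]
    · simp
  rw [hfilter, ← hpart, eq_sub_iff_add_eq, add_comm]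
  exact Finset.sum_filter_add_sum_filter_not _ _ _

lemma even_sum_sub_card {m : ℕ} {g : Fin m → ℤ} (hg : ∀ j, g j = 1 ∨ g j = -1) :
    Even (∑ j, g j - m) := by
  have : ∑ j, g j - m = ∑ j, (g j - 1) := by simp
  rw [this]
  refine Finset.even_sum _ fun j _ => ?_
  rcases hg j with h | h <;> rw [h] <;> decide

lemma sum_ite_lt {m p : ℕ} (hp : p ≤ m) :
    ∑ j : Fin m, (if j.val < p then (1 : ℤ) else -1) = 2 * p - m := by
  rw [Fin.sum_univ_eq_sum_range (fun j => if j < p then (1 : ℤ) else -1)]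
  obtain ⟨q, rfl⟩ := Nat.exists_eq_add_of_le hp
  rw [Finset.sum_range_add, Finset.sum_congr rfl
    (fun j hj => if_pos (Finset.mem_range.1 hj))]
  simp
  ring

/-- A signed dominating function of a complete multipartite graph with exactly one odd part
and at least three parts has weight at least three. -/
lemma three_le_weight (hk : 3 ≤ k) (o : Fin k) (hn : ∀ i, 0 < n i) (ho : Odd (n o))
    (he : ∀ i, i ≠ o → Even (n i)) (f : (Σ i, Fin (n i)) → ℤ) (hf : ∀ v, f v = 1 ∨ f v = -1)
    (hdom : ∀ v, 1 ≤ f v + (∑ u, f u - ∑ j, f ⟨v.1, j⟩)) :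
    3 ≤ ∑ v, f v := by
  set s := ∑ v, f v with hs
  have hpart (i : Fin k) : ∑ j, f ⟨i, j⟩ ≤ s - 2 ∨ (∑ j, f ⟨i, j⟩ = n i ∧ (n i : ℤ) ≤ s) := by
    by_cases hneg : ∃ j, f ⟨i, j⟩ = -1
    · obtain ⟨j, hj⟩ := hneg
      have := hdom ⟨i, j⟩
      simp only [hj] at this
      left
      linarith
    · have hpos (j : Fin (n i)) : f ⟨i, j⟩ = 1 :=
        (hf ⟨i, j⟩).resolve_right fun h => hneg ⟨j, h⟩
      have hsum : ∑ j, f ⟨i, j⟩ = n i := by simp [hpos]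
      have := hdom ⟨i, ⟨0, hn i⟩⟩
      rw [hsum, hpos] at this
      exact Or.inr ⟨hsum, by linarith⟩
  have hsplit : s = ∑ j, f ⟨o, j⟩ + ∑ i ∈ Finset.univ.erase o, ∑ j, f ⟨i, j⟩ := by
    rw [hs, Fintype.sum_sigma, Finset.add_sum_erase _ (fun i => ∑ j, f ⟨i, j⟩) (Finset.mem_univ o)]
  have hodd : Odd s := by
    rw [hsplit]
    refine Odd.add_even ?_ (Finset.even_sum _ fun i hi => ?_)
    · simpa using (even_sum_sub_card fun j => hf ⟨o, j⟩).add_odd ((Int.odd_coe_nat _).2 ho)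
    · simpa using (even_sum_sub_card fun j => hf ⟨i, j⟩).add
        ((Int.even_coe_nat _).2 (he i (Finset.ne_of_mem_erase hi)))
  by_contra! hlt
  have hle : s ≤ 1 := by
    obtain ⟨t, ht⟩ := hodd
    omega
  have hfirst : ∑ j, f ⟨o, j⟩ ≤ s := by
    rcases hpart o with h | h <;> omega
  have hrest : ∑ i ∈ Finset.univ.erase o, ∑ j, f ⟨i, j⟩ < 0 := by
    refine Finset.sum_neg (fun i hi => ?_) ?_
    · obtain ⟨t, ht⟩ := he i (Finset.ne_of_mem_erase hi)
      have := hn i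
      rcases hpart i with h | h <;> omega
    · rw [← Finset.card_pos, Finset.card_erase_of_mem (Finset.mem_univ o), Finset.card_univ,
        Fintype.card_fin]
      omega
  omega

/-- Prescribing `p i` positive values in the part `i` gives a signed dominating function of
weight three. -/
lemma exists_weight_three (p : Fin k → ℕ) (hp : ∀ i, p i ≤ n i)
    (hsum : ∑ i, (2 * p i - n i : ℤ) = 3)
    (hpart : ∀ i, (p i = n i ∧ n i ≤ 3) ∨ 2 * p i ≤ n i + 1) :
    ∃ f : (Σ i, Fin (n i)) → ℤ, (∀ v, f v = 1 ∨ f v = -1) ∧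
      (∀ v, 1 ≤ f v + (∑ u, f u - ∑ j, f ⟨v.1, j⟩)) ∧ 3 = ∑ v, f v := by
  have htotal : ∑ v : Σ i, Fin (n i), (if v.2.val < p v.1 then (1 : ℤ) else -1) = 3 := by
    rw [Fintype.sum_sigma, ← hsum]
    exact Finset.sum_congr rfl fun i _ => sum_ite_lt (hp i)
  refine ⟨fun v => if v.2.val < p v.1 then 1 else -1, fun v => ?_, fun v => ?_, htotal.symm⟩
  · by_cases h : v.2.val < p v.1 <;> simp [h]
  · simp only [htotal, sum_ite_lt (hp v.1)]
    have := v.2.isLt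
    have := hpart v.1
    split_ifs <;> omega

end SignedDomination

open SignedDomination

theorem signedDomNum_eq_three_multipartite
    (k : ℕ) (hk : 3 ≤ k) (n : Fin k → ℕ) (hn : ∀ i, 0 < n i)
    (h₁ : Odd (n ⟨0, by omega⟩))
    (h₂ : ∀ i : Fin k, i ≠ ⟨0, by omega⟩ → Even (n i))
    (h : n ⟨0, by omega⟩ = 3 ∨ ∃ i : Fin k, i ≠ ⟨0, by omega⟩ ∧ n i = 2) :
    signedDomNum (SimpleGraph.completeMultipartiteGraph fun i : Fin k => Fin (n i)) = 3 := by
  refine IsLeast.csInf_eq ⟨?_, ?_⟩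
  · simp only [Set.mem_ofPred_eq, sum_neighborFinset_completeMultipartiteGraph]
    generalize (⟨0, by omega⟩ : Fin k) = o at h₁ h₂ h
    rcases h with h | ⟨a, hao, ha⟩
    · refine exists_weight_three (fun i => if i = o then 3 else n i / 2) (fun i => ?_) ?_
        fun i => ?_
      · split_ifs with hi
        · rw [hi, h]
        · omega
      · rw [Finset.sum_eq_single o]
        · simp [h]
        · intro i _ hi
          obtain ⟨t, ht⟩ := h₂ i hi
          simp only [if_neg hi]
          omega
        · simp
      · by_cases hi : i = o
        · simp [hi, h]
        · simp only [if_neg hi]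
          omega
    · obtain ⟨r, hr⟩ := h₁
      refine exists_weight_three
        (fun i => if i = o then (n i + 1) / 2 else if i = a then 2 else n i / 2)
        (fun i => ?_) ?_ fun i => ?_
      · have := hn i
        split_ifs with hi hi'
        · omega
        · rw [hi', ha]
        · omega
      · rw [Finset.sum_eq_add o a hao.symm]
        · simp only [if_pos, if_neg hao]
          omega
        · intro i _ hi
          obtain ⟨t, ht⟩ := h₂ i hi.1
          simp only [if_neg hi.1, if_neg hi.2]
          omega
        · simp
        · simp
      · by_cases hi : i = o
        · simp only [if_pos hi]
          omega
        · by_cases hi' : i = a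
          · simp [hi', hao, ha]
          · simp only [if_neg hi, if_neg hi']
            omega
  · rintro w ⟨f, hf, hdom, rfl⟩
    simp only [sum_neighborFinset_completeMultipartiteGraph] at hdom
    exact three_le_weight hk _ hn h₁ h₂ f hf hdom
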